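/- Let c ≥ 1, 0 < α < π/2, and 0 ≤ θ < π/2 with cos α + sin²θ < cos²θ. Let H be a (c,α)-fat hexagon contained in a plane π₁ in ℝ³, and let π₂ be a plane making a (dihedral) angle at most θ with π₁. Then the orthogonal projection of H onto π₂ is an injective image of the vertex set forming a hexagon which is (c′,α′)-fat, where c′ = c / cos θ and α′ = arccos((cos α + sin²θ)/cos²θ). -/

import Mathlib

open Real EuclideanGeometry
open scoped RealInnerProductSpace

noncomputable section

abbrev E3 : Type := EuclideanSpace ℝ (Fin 3)

/-- A hexagon in ℝ³, given by its vertices `V 0, …, V 5` listed in cyclic boundary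
order: the vertices are distinct, coplanar, in convex position, and consecutive
vertices are adjacent on the boundary (the segment between them avoids the relative
interior of the hexagon). -/
def IsHexagon (V : Fin 6 → E3) : Prop :=
  Function.Injective V ∧
  Coplanar ℝ (Set.range V) ∧
  (∀ i : Fin 6, V i ∉ convexHull ℝ (V '' {j | j ≠ i})) ∧
  (∀ i : Fin 6,
    openSegment ℝ (V i) (V (i + 1)) ∩
      intrinsicInterior ℝ (convexHull ℝ (Set.range V)) = ∅)

/-- A hexagon is `(c, α)`-fat if the ratio of any two sides lies in `[1/c, c]` and it has
three pairwise non-neighbouring vertices (an alternating triple) whose interior angles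
lie in `[α, π - α]`. -/
def IsFatHexagon (c α : ℝ) (V : Fin 6 → E3) : Prop :=
  IsHexagon V ∧
  (∀ i j : Fin 6, dist (V i) (V (i + 1)) ≤ c * dist (V j) (V (j + 1))) ∧
  ((∀ i : Fin 6, Even (i : ℕ) →
      α ≤ ∠ (V (i - 1)) (V i) (V (i + 1)) ∧ ∠ (V (i - 1)) (V i) (V (i + 1)) ≤ π - α) ∨
   (∀ i : Fin 6, Odd (i : ℕ) →
      α ≤ ∠ (V (i - 1)) (V i) (V (i + 1)) ∧ ∠ (V (i - 1)) (V i) (V (i + 1)) ≤ π - α))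

/-- The (dihedral) angle between two planes in ℝ³ is at most `θ`: some nonzero normal
vectors of the two planes make an angle whose cosine is at least `cos θ` in absolute
value. -/
def PlanesAngleLE (Pl₁ Pl₂ : AffineSubspace ℝ E3) (θ : ℝ) : Prop :=
  ∃ n₁ n₂ : E3, n₁ ≠ 0 ∧ n₂ ≠ 0 ∧
    (∀ w ∈ Pl₁.direction, ⟪n₁, w⟫ = 0) ∧
    (∀ w ∈ Pl₂.direction, ⟪n₂, w⟫ = 0) ∧
    Real.cos θ * (‖n₁‖ * ‖n₂‖) ≤ |⟪n₁, n₂⟫|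

/-!
Let `m`, `n` be normals of the two planes. Since `m` and `n` make an angle at most `θ` (up to sign),
the component of `n` orthogonal to `m` has length at most `sin θ * ‖n‖`, so a vector `u ⟂ m` has
normal component at most `sin θ * ‖u‖` along `n`, and its projection `u'` onto the second plane has
length at least `cos θ * ‖u‖`. Projection therefore shrinks lengths by a factor between `cos θ`
and `1`, which gives `c / cos θ`. Since `⟪u', v'⟫` is `⟪u, v⟫` minus the inner product of the
normal components, `|⟪u', v'⟫| ≤ (cos α + sin θ ^ 2) * (‖u‖ * ‖v‖)`, while
`cos θ ^ 2 * (‖u‖ * ‖v‖) ≤ ‖u'‖ * ‖v'‖`; the quotient bounds the cosine of the projected angle.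
Finally, the projection restricted to the first plane is an injective affine map, hence preserves
convex position and the boundary order.
-/

section Inclination

variable {E : Type*} [NormedAddCommGroup E] [InnerProductSpace ℝ E]

lemma norm_starProjection_orthogonal_le_sin_mul_iff (K : Submodule ℝ E)
    [K.HasOrthogonalProjection] {θ : ℝ} (hθ₀ : 0 ≤ θ) (hθ₁ : θ ≤ π / 2) (u : E) :
    ‖Kᗮ.starProjection u‖ ≤ sin θ * ‖u‖ ↔ cos θ * ‖u‖ ≤ ‖K.starProjection u‖ := by
  have hsin : 0 ≤ sin θ := sin_nonneg_of_nonneg_of_le_pi hθ₀ (by linarith [pi_pos])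
  have hcos : 0 ≤ cos θ := cos_nonneg_of_neg_pi_div_two_le_of_le (by linarith) hθ₁
  have pythagoras := K.norm_sq_eq_add_norm_sq_starProjection u
  rw [← sq_le_sq₀ (norm_nonneg _) (by positivity), ← sq_le_sq₀ (by positivity) (norm_nonneg _),
    mul_pow, mul_pow, sin_sq]
  constructor <;> intro h <;> linarith

lemma norm_starProjection_span_singleton (v u : E) :
    ‖(ℝ ∙ v).starProjection u‖ = |⟪v, u⟫| / ‖v‖ := by
  rcases eq_or_ne v 0 with rfl | hv
  · simp
  · have hv' : ‖v‖ ≠ 0 := norm_ne_zero_iff.2 hv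
    rw [Submodule.starProjection_singleton, norm_smul, RCLike.ofReal_real_eq_id, id, norm_div,
      norm_pow, norm_norm, norm_eq_abs]
    field_simp

lemma abs_inner_le_sin_mul_norm_mul_norm {m n u : E} {θ : ℝ} (hθ₀ : 0 ≤ θ) (hθ₁ : θ ≤ π / 2)
    (hm : m ≠ 0) (hmn : cos θ * (‖m‖ * ‖n‖) ≤ |⟪m, n⟫|) (hmu : ⟪m, u⟫ = 0) :
    |⟪n, u⟫| ≤ sin θ * ‖n‖ * ‖u‖ := by
  have hu : (ℝ ∙ m)ᗮ.starProjection u = u :=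
    Submodule.starProjection_eq_self_iff.2
      (Submodule.mem_orthogonal_singleton_iff_inner_right.2 hmu)
  have hn : ‖(ℝ ∙ m)ᗮ.starProjection n‖ ≤ sin θ * ‖n‖ := by
    rw [norm_starProjection_orthogonal_le_sin_mul_iff _ hθ₀ hθ₁,
      norm_starProjection_span_singleton, le_div_iff₀ (norm_pos_iff.2 hm)]
    linarith
  calc |⟪n, u⟫| = |⟪(ℝ ∙ m)ᗮ.starProjection n, u⟫| := by
        rw [Submodule.inner_starProjection_left_eq_right, hu]
    _ ≤ ‖(ℝ ∙ m)ᗮ.starProjection n‖ * ‖u‖ := abs_real_inner_le_norm _ _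
    _ ≤ sin θ * ‖n‖ * ‖u‖ := by gcongr

lemma inner_starProjection_starProjection (K : Submodule ℝ E) [K.HasOrthogonalProjection]
    (u v : E) : ⟪K.starProjection u, K.starProjection v⟫ =
      ⟪u, v⟫ - ⟪Kᗮ.starProjection u, Kᗮ.starProjection v⟫ := by
  have hidem : ⟪K.starProjection u, K.starProjection v⟫ = ⟪u, K.starProjection v⟫ := by
    rw [Submodule.inner_starProjection_left_eq_right,
      Submodule.starProjection_eq_self_iff.2 (K.starProjection_apply_mem v)]
  have hidem' : ⟪Kᗮ.starProjection u, Kᗮ.starProjection v⟫ = ⟪u, Kᗮ.starProjection v⟫ := by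
    rw [Submodule.inner_starProjection_left_eq_right,
      Submodule.starProjection_eq_self_iff.2 (Kᗮ.starProjection_apply_mem v)]
  rw [hidem, hidem', eq_sub_iff_add_eq, ← inner_add_right,
    K.starProjection_add_starProjection_orthogonal]

lemma abs_inner_le_cos_mul_of_angle_mem_Icc {u v : E} {α : ℝ} (hα : 0 ≤ α)
    (h : InnerProductGeometry.angle u v ∈ Set.Icc α (π - α)) :
    |⟪u, v⟫| ≤ cos α * (‖u‖ * ‖v‖) := by
  have hcos : |cos (InnerProductGeometry.angle u v)| ≤ cos α := by
    rw [abs_le, ← cos_pi_sub]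
    exact ⟨cos_le_cos_of_nonneg_of_le_pi (InnerProductGeometry.angle_nonneg _ _)
      (by linarith) h.2,
      cos_le_cos_of_nonneg_of_le_pi hα (InnerProductGeometry.angle_le_pi _ _) h.1⟩
  rw [← InnerProductGeometry.cos_angle_mul_norm_mul_norm, abs_mul,
    abs_of_nonneg (a := ‖u‖ * ‖v‖) (by positivity)]
  gcongr

lemma angle_mem_Icc_arccos_of_abs_inner_le {u v : E} {t : ℝ} (ht : 0 ≤ t)
    (h : |⟪u, v⟫| ≤ t * (‖u‖ * ‖v‖)) :
    InnerProductGeometry.angle u v ∈ Set.Icc (arccos t) (π - arccos t) := by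
  have hquot : |⟪u, v⟫ / (‖u‖ * ‖v‖)| ≤ t := by
    rw [abs_div, abs_of_nonneg (a := ‖u‖ * ‖v‖) (by positivity)]
    exact div_le_of_le_mul₀ (by positivity) ht h
  rw [← arccos_neg]
  exact ⟨antitone_arccos (abs_le.1 hquot).2, antitone_arccos (abs_le.1 hquot).1⟩

/-- The angle between each vector of `K` and its orthogonal projection onto `L` is at most `θ`,
expressed (for `0 ≤ θ ≤ π / 2`) by the lengths of the two vectors. For planes in space this is the
dihedral angle bound in a form that does not mention normals. -/
def InclinationLE (K L : Submodule ℝ E) [L.HasOrthogonalProjection] (θ : ℝ) : Prop :=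
  ∀ u ∈ K, cos θ * ‖u‖ ≤ ‖L.starProjection u‖

lemma inclinationLE_of_orthogonal_eq_span_singleton {K L : Submodule ℝ E}
    [L.HasOrthogonalProjection] {m n : E} {θ : ℝ} (hθ₀ : 0 ≤ θ) (hθ₁ : θ ≤ π / 2) (hm : m ≠ 0)
    (hmK : ∀ u ∈ K, ⟪m, u⟫ = 0) (hL : Lᗮ = ℝ ∙ n) (hmn : cos θ * (‖m‖ * ‖n‖) ≤ |⟪m, n⟫|) :
    InclinationLE K L θ := by
  intro u hu
  have hsin : 0 ≤ sin θ := sin_nonneg_of_nonneg_of_le_pi hθ₀ (by linarith [pi_pos])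
  have hnu := abs_inner_le_sin_mul_norm_mul_norm hθ₀ hθ₁ hm hmn (hmK u hu)
  rw [← norm_starProjection_orthogonal_le_sin_mul_iff L hθ₀ hθ₁]
  simp only [hL]
  rw [norm_starProjection_span_singleton]
  exact div_le_of_le_mul₀ (norm_nonneg n) (by positivity) (by linarith)

namespace InclinationLE

variable {K L : Submodule ℝ E} [L.HasOrthogonalProjection] {θ : ℝ}

lemma abs_inner_starProjection_le (h : InclinationLE K L θ) (hθ₀ : 0 ≤ θ) (hθ₁ : θ ≤ π / 2)
    {u v : E} (hu : u ∈ K) (hv : v ∈ K) :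
    |⟪L.starProjection u, L.starProjection v⟫| ≤ |⟪u, v⟫| + sin θ ^ 2 * (‖u‖ * ‖v‖) := by
  have hsin {w : E} (hw : w ∈ K) : ‖Lᗮ.starProjection w‖ ≤ sin θ * ‖w‖ :=
    (norm_starProjection_orthogonal_le_sin_mul_iff L hθ₀ hθ₁ w).2 (h w hw)
  calc |⟪L.starProjection u, L.starProjection v⟫|
      = |⟪u, v⟫ - ⟪Lᗮ.starProjection u, Lᗮ.starProjection v⟫| := by
        rw [inner_starProjection_starProjection]
    _ ≤ |⟪u, v⟫| + |⟪Lᗮ.starProjection u, Lᗮ.starProjection v⟫| := abs_sub _ _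
    _ ≤ |⟪u, v⟫| + ‖Lᗮ.starProjection u‖ * ‖Lᗮ.starProjection v‖ := by
        gcongr; exact abs_real_inner_le_norm _ _
    _ ≤ |⟪u, v⟫| + (sin θ * ‖u‖) * (sin θ * ‖v‖) := by
        gcongr
        exacts [(norm_nonneg _).trans (hsin hu), hsin hu, hsin hv]
    _ = |⟪u, v⟫| + sin θ ^ 2 * (‖u‖ * ‖v‖) := by ring

lemma angle_starProjection_mem_Icc (h : InclinationLE K L θ) (hθ₀ : 0 ≤ θ) (hθ₁ : θ < π / 2)
    {α : ℝ} (hα : 0 ≤ α) {u v : E} (hu : u ∈ K) (hv : v ∈ K)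
    (huv : InnerProductGeometry.angle u v ∈ Set.Icc α (π - α)) :
    InnerProductGeometry.angle (L.starProjection u) (L.starProjection v) ∈
      Set.Icc (arccos ((cos α + sin θ ^ 2) / cos θ ^ 2))
        (π - arccos ((cos α + sin θ ^ 2) / cos θ ^ 2)) := by
  have hcosα : 0 ≤ cos α :=
    cos_nonneg_of_neg_pi_div_two_le_of_le (by linarith) (by linarith [huv.1, huv.2])
  have hcosθ : 0 < cos θ := cos_pos_of_mem_Ioo ⟨by linarith, hθ₁⟩
  refine angle_mem_Icc_arccos_of_abs_inner_le (by positivity) ?_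
  calc |⟪L.starProjection u, L.starProjection v⟫|
      ≤ |⟪u, v⟫| + sin θ ^ 2 * (‖u‖ * ‖v‖) := h.abs_inner_starProjection_le hθ₀ hθ₁.le hu hv
    _ ≤ cos α * (‖u‖ * ‖v‖) + sin θ ^ 2 * (‖u‖ * ‖v‖) := by
        gcongr; exact abs_inner_le_cos_mul_of_angle_mem_Icc hα huv
    _ = (cos α + sin θ ^ 2) / cos θ ^ 2 * ((cos θ * ‖u‖) * (cos θ * ‖v‖)) := by
        field_simp
    _ ≤ (cos α + sin θ ^ 2) / cos θ ^ 2 * (‖L.starProjection u‖ * ‖L.starProjection v‖) := by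
        gcongr
        exacts [h u hu, h v hv]

end InclinationLE

end Inclination

section AffineProjection

variable {E P : Type*} [NormedAddCommGroup E] [InnerProductSpace ℝ E] [MetricSpace P]
  [NormedAddTorsor E P] (s : AffineSubspace ℝ P) [Nonempty s]
  [s.direction.HasOrthogonalProjection]

lemma coe_orthogonalProjection_vsub_coe_orthogonalProjection (p q : P) :
    (orthogonalProjection s p : P) -ᵥ (orthogonalProjection s q : P) =
      s.direction.starProjection (p -ᵥ q) := by
  rw [← AffineSubspace.coe_vsub, ← ContinuousAffineMap.coe_toAffineMap,
    ← AffineMap.linearMap_vsub, orthogonalProjection_linear]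
  rfl

lemma dist_coe_orthogonalProjection_le (p q : P) :
    dist (orthogonalProjection s p : P) (orthogonalProjection s q : P) ≤ dist p q := by
  rw [dist_eq_norm_vsub E, dist_eq_norm_vsub E,
    coe_orthogonalProjection_vsub_coe_orthogonalProjection]
  exact s.direction.norm_starProjection_apply_le _

variable {s} {r : AffineSubspace ℝ P} {θ : ℝ}

lemma InclinationLE.cos_mul_dist_le_dist_orthogonalProjection
    (h : InclinationLE r.direction s.direction θ) {p q : P} (hp : p ∈ r) (hq : q ∈ r) :
    cos θ * dist p q ≤ dist (orthogonalProjection s p : P) (orthogonalProjection s q : P) := by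
  rw [dist_eq_norm_vsub E, dist_eq_norm_vsub E,
    coe_orthogonalProjection_vsub_coe_orthogonalProjection]
  exact h _ (AffineSubspace.vsub_mem_direction hp hq)

lemma InclinationLE.injOn_orthogonalProjection
    (h : InclinationLE r.direction s.direction θ) (hθ : 0 < cos θ) :
    Set.InjOn (fun p ↦ (orthogonalProjection s p : P)) r := by
  intro p hp q hq hpq
  have hdist := h.cos_mul_dist_le_dist_orthogonalProjection hp hq
  rw [dist_eq_zero.2 hpq] at hdist
  exact dist_le_zero.1 (nonpos_of_mul_nonpos_right hdist hθ)

lemma InclinationLE.dist_orthogonalProjection_le_div_cos_mul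
    (h : InclinationLE r.direction s.direction θ) (hθ : 0 < cos θ) {c : ℝ} (hc : 0 ≤ c)
    {p q p' q' : P} (hp : p ∈ r) (hq : q ∈ r) (hdist : dist p' q' ≤ c * dist p q) :
    dist (orthogonalProjection s p' : P) (orthogonalProjection s q' : P) ≤
      c / cos θ * dist (orthogonalProjection s p : P) (orthogonalProjection s q : P) :=
  calc dist (orthogonalProjection s p' : P) (orthogonalProjection s q' : P)
      ≤ dist p' q' := dist_coe_orthogonalProjection_le s p' q'
    _ ≤ c * dist p q := hdist
    _ = c / cos θ * (cos θ * dist p q) := by field_simp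
    _ ≤ c / cos θ * dist (orthogonalProjection s p : P) (orthogonalProjection s q : P) := by
        gcongr
        exact h.cos_mul_dist_le_dist_orthogonalProjection hp hq

lemma InclinationLE.angle_orthogonalProjection_mem_Icc
    (h : InclinationLE r.direction s.direction θ) (hθ₀ : 0 ≤ θ) (hθ₁ : θ < π / 2)
    {α : ℝ} (hα : 0 ≤ α) {p q t : P} (hp : p ∈ r) (hq : q ∈ r) (ht : t ∈ r)
    (hpqt : ∠ p q t ∈ Set.Icc α (π - α)) :
    ∠ (orthogonalProjection s p : P) (orthogonalProjection s q) (orthogonalProjection s t) ∈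
      Set.Icc (arccos ((cos α + sin θ ^ 2) / cos θ ^ 2))
        (π - arccos ((cos α + sin θ ^ 2) / cos θ ^ 2)) := by
  rw [EuclideanGeometry.angle, coe_orthogonalProjection_vsub_coe_orthogonalProjection,
    coe_orthogonalProjection_vsub_coe_orthogonalProjection]
  exact h.angle_starProjection_mem_Icc hθ₀ hθ₁ hα
    (AffineSubspace.vsub_mem_direction hp hq) (AffineSubspace.vsub_mem_direction ht hq) hpqt

end AffineProjection

section AffineImage

variable {𝕜 V W P Q : Type*} [Ring 𝕜]
  [AddCommGroup V] [Module 𝕜 V] [TopologicalSpace P] [AddTorsor V P]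
  [AddCommGroup W] [Module 𝕜 W] [TopologicalSpace Q] [AddTorsor W Q]
  (f : P →ᴬ[𝕜] Q) {s t : Set P}

lemma intrinsicInterior_image_subset_of_injOn (hf : Set.InjOn f (affineSpan 𝕜 s)) :
    intrinsicInterior 𝕜 (f '' s) ⊆ f '' intrinsicInterior 𝕜 s := by
  rintro _ ⟨y, hy, rfl⟩
  obtain ⟨x, hx, hxy⟩ := interior_subset hy
  have hmaps (z : affineSpan 𝕜 s) : f z ∈ affineSpan 𝕜 (f '' s) :=
    AffineSubspace.map_span f.toAffineMap s ▸ AffineSubspace.mem_map_of_mem f.toAffineMap z.2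
  let g : affineSpan 𝕜 s → affineSpan 𝕜 (f '' s) := fun z ↦ ⟨f z, hmaps z⟩
  have hg : Continuous g := (f.continuous.comp continuous_subtype_val).subtype_mk hmaps
  have hpreimage : g ⁻¹' ((↑) ⁻¹' (f '' s)) ⊆ (↑) ⁻¹' s := fun z hz ↦
    hf.mem_of_mem_image (subset_affineSpan 𝕜 s) z.2 hz
  let x' : affineSpan 𝕜 s := ⟨x, subset_affineSpan 𝕜 s hx⟩
  have hgx : g x' = y := Subtype.ext hxy
  refine ⟨x, ⟨x', ?_, rfl⟩, hxy⟩
  rw [← hgx] at hy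
  exact interior_mono hpreimage (preimage_interior_subset_interior_preimage hg hy)

lemma image_inter_intrinsicInterior_image_eq_empty (hf : Set.InjOn f (affineSpan 𝕜 s))
    (ht : t ⊆ affineSpan 𝕜 s) (hts : t ∩ intrinsicInterior 𝕜 s = ∅) :
    f '' t ∩ intrinsicInterior 𝕜 (f '' s) = ∅ := by
  rw [← Set.subset_empty_iff]
  calc f '' t ∩ intrinsicInterior 𝕜 (f '' s)
      ⊆ f '' t ∩ f '' intrinsicInterior 𝕜 s :=
        Set.inter_subset_inter_right _ (intrinsicInterior_image_subset_of_injOn f hf)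
    _ = f '' (t ∩ intrinsicInterior 𝕜 s) :=
        (hf.image_inter ht (intrinsicInterior_subset.trans (subset_affineSpan 𝕜 s))).symm
    _ = ∅ := by rw [hts, Set.image_empty]

end AffineImage

lemma coplanar_image {k V W P Q : Type*} [DivisionRing k]
    [AddCommGroup V] [Module k V] [AddTorsor V P] [AddCommGroup W] [Module k W] [AddTorsor W Q]
    (f : P →ᵃ[k] Q) {s : Set P} (hs : Coplanar k s) : Coplanar k (f '' s) := by
  rw [Coplanar, ← AffineMap.map_vectorSpan, ← Cardinal.lift_le]
  exact (lift_rank_map_le f.linear _).trans (by simpa [Coplanar] using hs)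

lemma IsHexagon.map_of_injOn {V : Fin 6 → E3} (hV : IsHexagon V) (f : E3 →ᴬ[ℝ] E3)
    (hf : Set.InjOn f (affineSpan ℝ (Set.range V))) : IsHexagon (f ∘ V) := by
  obtain ⟨hinj, hcoplanar, hconvex, hside⟩ := hV
  have hmem (i : Fin 6) : V i ∈ affineSpan ℝ (Set.range V) :=
    mem_affineSpan ℝ (Set.mem_range_self i)
  have hhull : convexHull ℝ (Set.range V) ⊆ affineSpan ℝ (Set.range V) :=
    convexHull_subset_affineSpan _
  have hsegment (i : Fin 6) :
      openSegment ℝ (V i) (V (i + 1)) ⊆ affineSpan ℝ (Set.range V) :=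
    (affineSpan ℝ (Set.range V)).convex.openSegment_subset (hmem i) (hmem (i + 1))
  have himage (t : Set E3) : convexHull ℝ (f '' t) = f '' convexHull ℝ t :=
    (f.toAffineMap.image_convexHull t).symm
  refine ⟨fun i j hij ↦ hinj (hf (hmem i) (hmem j) hij), ?_, fun i ↦ ?_, fun i ↦ ?_⟩
  · rw [Set.range_comp]
    exact coplanar_image f.toAffineMap hcoplanar
  · rw [Set.image_comp, himage, Function.comp_apply, hf.mem_image_iff _ (hmem i)]
    · exact hconvex i
    · exact (convexHull_mono (Set.image_subset_range _ _)).trans hhull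
  · have hsegment_image : f '' openSegment ℝ (V i) (V (i + 1)) =
        openSegment ℝ (f (V i)) (f (V (i + 1))) := image_openSegment ℝ f.toAffineMap _ _
    rw [Set.range_comp, himage, Function.comp_apply, Function.comp_apply, ← hsegment_image]
    apply image_inter_intrinsicInterior_image_eq_empty f _ _ (hside i) <;>
      rw [affineSpan_convexHull]
    exacts [hf, hsegment i]

lemma PlanesAngleLE.inclinationLE {r s : AffineSubspace ℝ E3} {θ : ℝ} (h : PlanesAngleLE r s θ)
    (hθ₀ : 0 ≤ θ) (hθ₁ : θ ≤ π / 2) (hs : Module.finrank ℝ s.direction = 2) :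
    InclinationLE r.direction s.direction θ := by
  obtain ⟨m, n, hm, hn, hmr, hns, hmn⟩ := h
  have hfinrank : Module.finrank ℝ s.directionᗮ = 1 := by
    have := s.direction.finrank_add_finrank_orthogonal
    rw [hs, finrank_euclideanSpace_fin] at this
    omega
  have hspan : s.directionᗮ = ℝ ∙ n := eq_span_singleton_of_mem_of_finrank_eq_one
    hfinrank ((Submodule.mem_orthogonal' _ _).2 hns) hn
  exact inclinationLE_of_orthogonal_eq_span_singleton hθ₀ hθ₁ hm hmr hspan hmn

theorem stmt9 (c α θ : ℝ) (hc : 1 ≤ c) (hα₀ : 0 < α) (hα₁ : α < π / 2)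
    (hθ₀ : 0 ≤ θ) (hθ₁ : θ < π / 2)
    (hcond : Real.cos α + Real.sin θ ^ 2 < Real.cos θ ^ 2)
    (Pl₁ Pl₂ : AffineSubspace ℝ E3) [Nonempty Pl₁] [Nonempty Pl₂]
    (hPl₁ : Module.finrank ℝ Pl₁.direction = 2)
    (hPl₂ : Module.finrank ℝ Pl₂.direction = 2)
    (hangle : PlanesAngleLE Pl₁ Pl₂ θ)
    (V : Fin 6 → E3) (hV : IsFatHexagon c α V) (hVmem : ∀ i, V i ∈ Pl₁) :
    Function.Injective
      (fun i : Fin 6 => (EuclideanGeometry.orthogonalProjection Pl₂ (V i) : E3)) ∧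
    IsFatHexagon (c / Real.cos θ)
      (Real.arccos ((Real.cos α + Real.sin θ ^ 2) / Real.cos θ ^ 2))
      (fun i : Fin 6 => (EuclideanGeometry.orthogonalProjection Pl₂ (V i) : E3)) := by
  have hcos : 0 < Real.cos θ := cos_pos_of_mem_Ioo ⟨by linarith, hθ₁⟩
  have hincl := hangle.inclinationLE hθ₀ hθ₁.le hPl₂
  obtain ⟨hhex, hsides, hangles⟩ := hV
  have hspan : affineSpan ℝ (Set.range V) ≤ Pl₁ := affineSpan_le.2 (Set.range_subset_iff.2 hVmem)
  have hproj : IsHexagon (fun i ↦ (orthogonalProjection Pl₂ (V i) : E3)) :=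
    hhex.map_of_injOn (Pl₂.subtypeA.comp (orthogonalProjection Pl₂))
      ((hincl.injOn_orthogonalProjection hcos).mono hspan)
  have hangle_proj (i : Fin 6) :=
    hincl.angle_orthogonalProjection_mem_Icc hθ₀ hθ₁ hα₀.le
      (hVmem (i - 1)) (hVmem i) (hVmem (i + 1))
  refine ⟨hproj.1, hproj, fun i j ↦ ?_, hangles.imp
    (fun h i hi ↦ hangle_proj i (h i hi)) (fun h i hi ↦ hangle_proj i (h i hi))⟩
  exact hincl.dist_orthogonalProjection_le_div_cos_mul hcos (by linarith)
    (hVmem j) (hVmem (j + 1)) (hsides i j)
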